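/- arXiv:1703.10646 — 2 statements merged into one kernel-verified Lean document; each statement's English description precedes it below -/
import Mathlib

section
/- The imaginary part of the hermitian form h takes the following values on the pairs of lattice generators: Im h(λ₁,λ₂) = −1, Im h(λ₁,e₁) = 3, Im h(λ₁,e₂) = −2, Im h(λ₂,e₁) = −1, Im h(λ₂,e₂) = 3, Im h(e₁,e₂) = −1. In particular, Im h takes integer values on all pairs of elements of the lattice Λ'. -/
noncomputable section

/-- ζ = (1 + √3·i)/2, a primitive sixth root of unity. -/
def ζ : ℂ := (1 + (Real.sqrt 3 : ℂ) * Complex.I) / 2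

def e1 : ℂ × ℂ := (1, 0)
def e2 : ℂ × ℂ := (0, 1)
def l1 : ℂ × ℂ := (ζ, 0)
def l2 : ℂ × ℂ := (0, ζ)

/-- The period lattice Λ' = ℤλ₁ ⊕ ℤλ₂ ⊕ ℤe₁ ⊕ ℤe₂ ⊂ ℂ². -/
def Λ' : Set (ℂ × ℂ) :=
  {v | ∃ a b c d : ℤ, v = (a : ℂ) • l1 + (b : ℂ) • l2 + (c : ℂ) • e1 + (d : ℂ) • e2}

/-- The hermitian form h representing the class of D_{A'} in NS(A'). -/
def h (v w : ℂ × ℂ) : ℂ :=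
  (2 / (Real.sqrt 3 : ℂ)) *
    (3 * v.1 * (starRingEnd ℂ) w.1 - (1 + ζ) * v.1 * (starRingEnd ℂ) w.2
      - (1 + (starRingEnd ℂ) ζ) * v.2 * (starRingEnd ℂ) w.1
      + 3 * v.2 * (starRingEnd ℂ) w.2)

/-!
The lattice `Λ'` is `ℤ[ζ] × ℤ[ζ]`, and `2 / √3 = 1 / Im ζ`. Hence `h = H / Im ζ`, where the
hermitian form `H` has its coefficients in `ℤ[ζ]`. Since `ℤ[ζ]` is a ring stable under conjugation
(`conj ζ = 1 - ζ`), `H` maps `Λ' × Λ'` to `ℤ[ζ]`, and `Im (a + b ζ) / Im ζ = b` is an integer.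
-/

theorem ζ_im : ζ.im = √3 / 2 := by
  simp [ζ]

theorem ζ_im_ne_zero : ζ.im ≠ 0 := by
  rw [ζ_im]
  positivity

theorem conj_ζ : starRingEnd ℂ ζ = 1 - ζ := by
  apply Complex.ext
  · simp only [ζ, Complex.conj_re, Complex.sub_re, Complex.one_re]
    norm_num
  · simp

theorem ζ_sq : ζ ^ 2 = ζ - 1 := by
  have sqrt_three_sq : (√3 : ℂ) ^ 2 = 3 := by
    exact_mod_cast Real.sq_sqrt (zero_le_three (α := ℝ))
  unfold ζ
  linear_combination (√3 : ℂ) ^ 2 / 4 * Complex.I_sq - 1 / 4 * sqrt_three_sq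

/-- The ring `ℤ[ζ]` of Eisenstein integers as a subring of `ℂ`, with its elements written in the
`ℤ`-basis `1, ζ` so that the coefficient of `ζ` can be read off. -/
def eisensteinIntegers : Subring ℂ where
  carrier := {z | ∃ a b : ℤ, z = a + b * ζ}
  zero_mem' := ⟨0, 0, by simp⟩
  one_mem' := ⟨1, 0, by simp⟩
  add_mem' := by
    rintro _ _ ⟨a, b, rfl⟩ ⟨c, d, rfl⟩
    exact ⟨a + c, b + d, by push_cast; ring⟩
  neg_mem' := by
    rintro _ ⟨a, b, rfl⟩
    exact ⟨-a, -b, by push_cast; ring⟩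
  mul_mem' := by
    rintro _ _ ⟨a, b, rfl⟩ ⟨c, d, rfl⟩
    refine ⟨a * c - b * d, a * d + b * c + b * d, ?_⟩
    push_cast
    linear_combination (b * d : ℂ) * ζ_sq

theorem mem_eisensteinIntegers_iff {z : ℂ} :
    z ∈ eisensteinIntegers ↔ ∃ a b : ℤ, z = a + b * ζ :=
  Iff.rfl

theorem ζ_mem_eisensteinIntegers : ζ ∈ eisensteinIntegers :=
  ⟨0, 1, by simp⟩

theorem conj_mem_eisensteinIntegers {z : ℂ} (hz : z ∈ eisensteinIntegers) :
    starRingEnd ℂ z ∈ eisensteinIntegers := by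
  obtain ⟨a, b, rfl⟩ := hz
  simp only [map_add, map_mul, map_intCast, conj_ζ]
  exact add_mem (intCast_mem _ a)
    (mul_mem (intCast_mem _ b) (sub_mem (one_mem _) ζ_mem_eisensteinIntegers))

theorem exists_int_im_div_ζ_im_eq {z : ℂ} (hz : z ∈ eisensteinIntegers) :
    ∃ n : ℤ, z.im / ζ.im = n := by
  obtain ⟨a, b, rfl⟩ := hz
  exact ⟨b, by simp [ζ_im_ne_zero]⟩

theorem mem_Λ'_iff {v : ℂ × ℂ} :
    v ∈ Λ' ↔ v.1 ∈ eisensteinIntegers ∧ v.2 ∈ eisensteinIntegers := by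
  simp only [Λ', Set.mem_ofPred_eq, mem_eisensteinIntegers_iff]
  constructor
  · rintro ⟨a, b, c, d, rfl⟩
    exact ⟨⟨c, a, by simp [l1, l2, e1, e2, add_comm]⟩, ⟨d, b, by simp [l1, l2, e1, e2, add_comm]⟩⟩
  · rintro ⟨⟨c, a, hfst⟩, ⟨d, b, hsnd⟩⟩
    exact ⟨a, b, c, d, by ext1 <;> simp [l1, l2, e1, e2, hfst, hsnd, add_comm]⟩

/-- The hermitian form on `ℂ²` with Gram matrix `(3, -(1 + ζ); -(1 + conj ζ), 3)`, that is, `h`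
without its factor `2 / √3`. -/
def eisensteinForm (v w : ℂ × ℂ) : ℂ :=
  3 * v.1 * starRingEnd ℂ w.1 - (1 + ζ) * v.1 * starRingEnd ℂ w.2
    - (1 + starRingEnd ℂ ζ) * v.2 * starRingEnd ℂ w.1 + 3 * v.2 * starRingEnd ℂ w.2

theorem im_h_eq_im_eisensteinForm_div (v w : ℂ × ℂ) :
    (h v w).im = (eisensteinForm v w).im / ζ.im := by
  have h_eq : h v w = ((2 / √3 : ℝ) : ℂ) * eisensteinForm v w := by
    simp only [h, eisensteinForm, Complex.ofReal_div, Complex.ofReal_ofNat]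
  rw [h_eq, Complex.im_ofReal_mul, ζ_im, div_div_eq_mul_div]
  ring

theorem eisensteinForm_mem_eisensteinIntegers {v w : ℂ × ℂ} (hv : v ∈ Λ') (hw : w ∈ Λ') :
    eisensteinForm v w ∈ eisensteinIntegers := by
  obtain ⟨hv₁, hv₂⟩ := mem_Λ'_iff.mp hv
  obtain ⟨hw₁, hw₂⟩ := mem_Λ'_iff.mp hw
  have three_mem : (3 : ℂ) ∈ eisensteinIntegers := ofNat_mem _ 3
  have one_add_ζ_mem : 1 + ζ ∈ eisensteinIntegers := add_mem (one_mem _) ζ_mem_eisensteinIntegers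
  have one_add_conj_ζ_mem : 1 + starRingEnd ℂ ζ ∈ eisensteinIntegers :=
    add_mem (one_mem _) (conj_mem_eisensteinIntegers ζ_mem_eisensteinIntegers)
  have term_mem {c x y : ℂ} (hc : c ∈ eisensteinIntegers) (hx : x ∈ eisensteinIntegers)
      (hy : y ∈ eisensteinIntegers) : c * x * starRingEnd ℂ y ∈ eisensteinIntegers :=
    mul_mem (mul_mem hc hx) (conj_mem_eisensteinIntegers hy)
  exact add_mem (sub_mem (sub_mem (term_mem three_mem hv₁ hw₁) (term_mem one_add_ζ_mem hv₁ hw₂))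
    (term_mem one_add_conj_ζ_mem hv₂ hw₁)) (term_mem three_mem hv₂ hw₂)

theorem eisensteinForm_l1_l2 : eisensteinForm l1 l2 = -1 - ζ := by
  simp only [eisensteinForm, l1, l2, map_zero, conj_ζ]
  linear_combination (1 + ζ) * ζ_sq

theorem eisensteinForm_l1_e1 : eisensteinForm l1 e1 = 3 * ζ := by
  simp [eisensteinForm, l1, e1]

theorem eisensteinForm_l1_e2 : eisensteinForm l1 e2 = 1 - 2 * ζ := by
  simp only [eisensteinForm, l1, e2, map_zero, map_one]
  linear_combination -ζ_sq

theorem eisensteinForm_l2_e1 : eisensteinForm l2 e1 = -1 - ζ := by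
  simp only [eisensteinForm, l2, e1, map_zero, map_one, conj_ζ]
  linear_combination ζ_sq

theorem eisensteinForm_l2_e2 : eisensteinForm l2 e2 = 3 * ζ := by
  simp [eisensteinForm, l2, e2]

theorem eisensteinForm_e1_e2 : eisensteinForm e1 e2 = -1 - ζ := by
  simp only [eisensteinForm, e1, e2, map_zero, map_one]
  ring

/-- The values of Im h on pairs of lattice generators; in particular Im h is
integer-valued on Λ' × Λ'. -/
theorem stmt3 :
    (h l1 l2).im = -1 ∧ (h l1 e1).im = 3 ∧ (h l1 e2).im = -2 ∧
    (h l2 e1).im = -1 ∧ (h l2 e2).im = 3 ∧ (h e1 e2).im = -1 ∧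
    (∀ v ∈ Λ', ∀ w ∈ Λ', ∃ n : ℤ, (h v w).im = (n : ℝ)) := by
  simp only [im_h_eq_im_eisensteinForm_div]
  refine ⟨?_, ?_, ?_, ?_, ?_, ?_, fun v hv w hw ↦
    exists_int_im_div_ζ_im_eq (eisensteinForm_mem_eisensteinIntegers hv hw)⟩
  · simp [eisensteinForm_l1_l2, ζ_im_ne_zero]
  · simp [eisensteinForm_l1_e1, ζ_im_ne_zero]
  · simp [eisensteinForm_l1_e2, neg_div, ζ_im_ne_zero]
  · simp [eisensteinForm_l2_e1, ζ_im_ne_zero]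
  · simp [eisensteinForm_l2_e2, ζ_im_ne_zero]
  · simp [eisensteinForm_e1_e2, ζ_im_ne_zero]
end
end

section
/- In the group of permutations of {1,…,16}, the subgroup generated by p₂, p₃ and s is isomorphic to GL(2, ℤ/3ℤ). -/
/-- The permutation p₂ = (1 13 7 12)(2 9 14 16)(3 5 15 6)(4 11 8 10) of {1,…,16},
written 0-indexed on `Fin 16`. -/
def p2 : Equiv.Perm (Fin 16) :=
  ⟨![12, 8, 4, 10, 14, 2, 11, 9, 13, 3, 7, 0, 6, 15, 5, 1],
   ![11, 15, 5, 9, 2, 14, 12, 10, 1, 7, 3, 6, 0, 8, 4, 13],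
   by decide, by decide⟩

/-- The permutation p₃ = (1 13 5 7 12 6)(2 4 11 14 8 10)(3 15)(9 16) of {1,…,16},
written 0-indexed on `Fin 16`. -/
def p3 : Equiv.Perm (Fin 16) :=
  ⟨![12, 3, 14, 10, 6, 0, 11, 9, 15, 1, 13, 5, 4, 7, 2, 8],
   ![5, 9, 14, 1, 12, 11, 4, 13, 15, 7, 3, 6, 0, 10, 2, 8],
   by decide, by decide⟩

/-- The permutation s = (1 14)(2 7)(3 16)(4 5)(6 8)(9 15)(10 12)(11 13) of {1,…,16},
written 0-indexed on `Fin 16`. -/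
def sPerm : Equiv.Perm (Fin 16) :=
  ⟨![13, 6, 15, 4, 3, 7, 1, 5, 14, 11, 12, 9, 10, 0, 8, 2],
   ![13, 6, 15, 4, 3, 7, 1, 5, 14, 11, 12, 9, 10, 0, 8, 2],
   by decide, by decide⟩

/-!
Let `g ∈ GL₂(𝔽₃)` act on pairs of a nonzero vector `v` and a unit `u` by
`(v, u) ↦ (g v, det g · u)`. There are `8 · 2 = 16` such pairs and the action is faithful. Under a
suitable labelling of the pairs, p₂ and p₃ are the actions of the reductions mod 3 of the generators
`S` and `S T` of `SL₂(ℤ)`, and s is the action of a matrix of determinant `-1`. Reduction maps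
`SL₂(ℤ)` onto `SL₂(𝔽₃)`, because it hits every transvection, and `-1` generates `𝔽₃ˣ`, so these
three matrices generate `GL₂(𝔽₃)`.
-/

open Matrix Matrix.SpecialLinearGroup ModularGroup
open scoped MatrixGroups

section Generation

theorem subgroup_eq_top_of_ker_le_of_map_eq_top {G N : Type*} [Group G] [Group N] {f : G →* N}
    {H : Subgroup G} (hker : f.ker ≤ H) (hmap : H.map f = ⊤) : H = ⊤ := by
  rw [← Subgroup.comap_map_eq_self hker, hmap, Subgroup.comap_top]

theorem closure_pair_mul_right {G : Type*} [Group G] (a b : G) :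
    Subgroup.closure {a, a * b} = Subgroup.closure {a, b} := by
  refine le_antisymm ?_ ?_ <;> rw [Subgroup.closure_le, Set.pair_subset_iff]
  · have ha : a ∈ Subgroup.closure {a, b} := Subgroup.mem_closure_of_mem (by simp)
    have hb : b ∈ Subgroup.closure {a, b} := Subgroup.mem_closure_of_mem (by simp)
    exact ⟨ha, mul_mem ha hb⟩
  · have ha : a ∈ Subgroup.closure {a, a * b} := Subgroup.mem_closure_of_mem (by simp)
    have hab : a * b ∈ Subgroup.closure {a, a * b} := Subgroup.mem_closure_of_mem (by simp)
    exact ⟨ha, (mul_mem_cancel_left ha).1 hab⟩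

theorem map_transvection {n R S : Type*} [DecidableEq n] [CommRing R] [CommRing S]
    (f : R →+* S) (i j : n) (c : R) :
    (Matrix.transvection i j c).map f = Matrix.transvection i j (f c) := by
  simp [Matrix.transvection, Matrix.map_add, Matrix.map_one, Matrix.map_single]

variable {R K : Type*} [CommRing R] [Field K]

theorem specialLinearGroup_fin_two_map_surjective {f : R →+* K} (hf : Function.Surjective f) :
    Function.Surjective (SpecialLinearGroup.map (n := Fin 2) f) := by
  intro A
  induction A using SL2.transvection_induction with
  | htransvec i j hij c =>
    obtain ⟨c, rfl⟩ := hf c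
    exact ⟨⟨Matrix.transvection i j c, det_transvection_of_ne i j hij c⟩,
      Subtype.ext (map_transvection f i j c)⟩
  | hmul A B hA hB =>
    obtain ⟨A, rfl⟩ := hA
    obtain ⟨B, rfl⟩ := hB
    exact ⟨A * B, map_mul _ A B⟩

theorem range_mapGL_fin_two [Algebra R K] (hRK : Function.Surjective (algebraMap R K)) :
    (mapGL K : SL(2, R) →* GL (Fin 2) K).range = GeneralLinearGroup.det.ker := by
  rw [mapGL, MonoidHom.range_comp,
    MonoidHom.range_eq_top.2 (specialLinearGroup_fin_two_map_surjective hRK),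
    ← MonoidHom.range_eq_map]
  exact SetLike.coe_injective range_toGL

theorem closure_insert_image_mapGL_eq_top [Algebra R K]
    (hRK : Function.Surjective (algebraMap R K)) {s : Set SL(2, R)}
    (hs : Subgroup.closure s = ⊤) {g : GL (Fin 2) K} (hg : Subgroup.zpowers g.det = ⊤) :
    Subgroup.closure (insert g (mapGL K '' s)) = ⊤ := by
  refine subgroup_eq_top_of_ker_le_of_map_eq_top (f := GeneralLinearGroup.det) ?_ ?_
  · rw [← range_mapGL_fin_two hRK, MonoidHom.range_eq_map, ← hs, MonoidHom.map_closure]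
    exact Subgroup.closure_mono (Set.subset_insert _ _)
  · rw [eq_top_iff, ← hg, Subgroup.zpowers_le]
    exact Subgroup.mem_map_of_mem _ (Subgroup.mem_closure_of_mem (Set.mem_insert _ _))

theorem closure_S_S_mul_T : Subgroup.closure {S, S * T} = ⊤ := by
  rw [closure_pair_mul_right, SpecialLinearGroup.SL2Z_generators]

end Generation

section OrientedVector

variable {n R : Type*} [Fintype n] [DecidableEq n] [CommRing R]

variable (n R) in
/-- An oriented vector: a nonzero vector together with a unit, where the unit is thought of as a
generator of the top exterior power of `n → R`. -/
abbrev OrientedVector : Type _ := {v : n → R // v ≠ 0} × Rˣ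

/-- The permutation representation of `GL n R` on oriented vectors: the standard action on the
vector, and multiplication by the determinant on the unit. -/
def orientedVectorHom : GL n R →* Equiv.Perm (OrientedVector n R) where
  toFun g := (MulAction.toPerm g).prodCongr (MulAction.toPerm g.det)
  map_one' := by ext <;> simp
  map_mul' g h := by ext <;> simp [mul_smul, mul_assoc]

theorem orientedVectorHom_injective :
    Function.Injective (orientedVectorHom : GL n R →* Equiv.Perm (OrientedVector n R)) := by
  intro g h hgh
  refine Units.ext (ext_iff_smul.2 fun v ↦ ?_)
  obtain rfl | hv := eq_or_ne v 0
  · simp only [smul_zero]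
  · have hpair : orientedVectorHom g (⟨v, hv⟩, 1) = orientedVectorHom h (⟨v, hv⟩, 1) :=
      DFunLike.congr_fun hgh _
    exact congrArg (fun x : OrientedVector n R ↦ x.1.1) hpair

end OrientedVector

section Labelling

/-- The labelling of the oriented vectors in `𝔽₃²` by the sixteen points, 0-indexed. It is found by
sending the first point to the first basis vector with unit `1` and propagating along p₂, p₃, s. -/
def orientedVectorLabel (i : Fin 16) : OrientedVector (Fin 2) (ZMod 3) :=
  (⟨![![1, 0], ![-1, 1], ![1, 1], ![-1, 0], ![-1, 1], ![1, -1], ![-1, 0], ![1, 0],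
      ![-1, -1], ![0, 1], ![0, -1], ![0, -1], ![0, 1], ![1, -1], ![-1, -1], ![1, 1]] i,
    by revert i; decide⟩,
   ![1, -1, 1, -1, 1, 1, 1, -1, -1, -1, -1, 1, 1, -1, 1, -1] i)

theorem orientedVectorLabel_bijective : Function.Bijective orientedVectorLabel := by
  decide +kernel

/-- The permutation representation of `GL₂(𝔽₃)` on the sixteen points, obtained from the one on
oriented vectors through `orientedVectorLabel`. -/
noncomputable def pointHom : GL (Fin 2) (ZMod 3) →* Equiv.Perm (Fin 16) :=
  (Equiv.ofBijective _ orientedVectorLabel_bijective).symm.permCongrHom.toMonoidHom.comp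
    orientedVectorHom

theorem pointHom_injective : Function.Injective pointHom :=
  (Equiv.permCongrHom _).injective.comp orientedVectorHom_injective

theorem pointHom_eq_iff {g : GL (Fin 2) (ZMod 3)} {σ : Equiv.Perm (Fin 16)} :
    pointHom g = σ ↔
      ∀ i, orientedVectorHom g (orientedVectorLabel i) = orientedVectorLabel (σ i) := by
  rw [Equiv.ext_iff]
  exact forall_congr' fun i ↦
    (Equiv.ofBijective _ orientedVectorLabel_bijective).symm_apply_eq

theorem pointHom_mapGL_S : pointHom (mapGL (ZMod 3) S) = p2 :=
  pointHom_eq_iff.2 (by decide +kernel)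

theorem pointHom_mapGL_S_mul_T : pointHom (mapGL (ZMod 3) (S * T)) = p3 :=
  pointHom_eq_iff.2 (by decide +kernel)

/-- The linear reflection of `𝔽₃²` inducing the permutation s. -/
def reflection : GL (Fin 2) (ZMod 3) :=
  ⟨!![1, 0; -1, -1], !![1, 0; -1, -1], by decide, by decide⟩

theorem pointHom_reflection : pointHom reflection = sPerm :=
  pointHom_eq_iff.2 (by decide +kernel)

theorem zpowers_det_reflection : Subgroup.zpowers reflection.det = ⊤ := by
  have hdet : reflection.det = -1 := by decide
  have hunits : ∀ u : (ZMod 3)ˣ, u = 1 ∨ u = -1 := by decide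
  rw [hdet, eq_top_iff]
  rintro u -
  obtain rfl | rfl := hunits u
  · exact one_mem _
  · exact Subgroup.mem_zpowers _

theorem range_pointHom : pointHom.range = Subgroup.closure {p2, p3, sPerm} := by
  have hgen : Subgroup.closure {reflection, mapGL (ZMod 3) S, mapGL (ZMod 3) (S * T)} = ⊤ := by
    simpa only [Set.image_pair] using closure_insert_image_mapGL_eq_top
      ZMod.intCast_surjective closure_S_S_mul_T zpowers_det_reflection
  have himage : pointHom '' {reflection, mapGL (ZMod 3) S, mapGL (ZMod 3) (S * T)} =
      {p2, p3, sPerm} := by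
    rw [Set.image_insert_eq, Set.image_pair, pointHom_reflection, pointHom_mapGL_S,
      pointHom_mapGL_S_mul_T, Set.insert_comm, Set.pair_comm]
  rw [MonoidHom.range_eq_map, ← hgen, MonoidHom.map_closure, himage]

end Labelling

/-- The subgroup generated by p₂, p₃ and s is isomorphic to GL(2, ℤ/3ℤ). -/
theorem stmt15 :
    Nonempty ((Subgroup.closure {p2, p3, sPerm}) ≃*
      Matrix.GeneralLinearGroup (Fin 2) (ZMod 3)) :=
  ⟨((MonoidHom.ofInjective pointHom_injective).trans
    (MulEquiv.subgroupCongr range_pointHom)).symm⟩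
end
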